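/- arXiv:2102.10707 — 3 statements merged into one kernel-verified Lean document; each statement's English description precedes it below -/
import Mathlib

section
/- Fix positive integers d, J, s with J dividing d and s ≤ d, and fix a partition of the coordinate set {1,…,d} into J blocks B₁,…,B_J, each of size d/J. Let g ∈ ℝ^d be a fixed vector with at most s nonzero entries. Let π be a permutation of {1,…,d} chosen uniformly at random, and for each j let Y_j denote the number of indices i with g_i ≠ 0 and π(i) ∈ B_j. Then for any Δ with 0 < Δ ≤ 1, with probability at least 1 − 2J·exp(−Δ²s/(3J)) over the choice of π, one has Y_j ≤ (1+Δ)s/J simultaneously for all j ∈ {1,…,J}. -/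
open scoped Classical

/-!
Every `i` in a set `S` of coordinates lands in a block `B` with probability `B.dens`, and these
events are negatively correlated: all of `T ⊆ S` lands in `B` with probability at most
`B.dens ^ #T`, as if coordinates were placed independently. Expanding `(1 + δ) ^ Y` over the subsets
of `S` therefore bounds the moment generating function of the number `Y` of elements of `S` in `B`
by `exp (δ * 𝔼 Y)`. Chernoff's bound follows for each block, and a union bound over the blocks
finishes the proof.
-/

open Finset Equiv
open scoped BigOperators

section ExponentialMoment

variable {Ω : Type*} [Fintype Ω]

lemma dens_mul_le_expect {K : Type*} [Semifield K] [LinearOrder K] [IsStrictOrderedRing K]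
    {f : Ω → K} {c : K} (s : Finset Ω) (hf : ∀ ω, 0 ≤ f ω) (hc : ∀ ω ∈ s, c ≤ f ω) :
    s.dens * c ≤ 𝔼 ω, f ω := by
  rw [nnratCast_dens, Fintype.expect_eq_sum_div_card, div_mul_eq_mul_div]
  gcongr
  calc #s * c = ∑ _ω ∈ s, c := by rw [sum_const, nsmul_eq_mul]
    _ ≤ ∑ ω ∈ s, f ω := sum_le_sum hc
    _ ≤ ∑ ω, f ω := sum_le_univ_sum_of_nonneg hf

lemma expect_ite_mem_const {K : Type*} [Semifield K] [CharZero K] [DecidableEq Ω]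
    (s : Finset Ω) (c : K) :
    𝔼 ω, (if ω ∈ s then c else 0) = s.dens * c := by
  rw [Fintype.expect_eq_sum_div_card, Fintype.sum_ite_mem, sum_const, nsmul_eq_mul,
    nnratCast_dens, div_mul_eq_mul_div]

lemma dens_biUnion_le {ι : Type*} (t : Finset ι) (s : ι → Finset Ω) [DecidableEq Ω] :
    (t.biUnion s).dens ≤ ∑ j ∈ t, (s j).dens := by
  simp only [dens_eq_card_div_card, ← sum_div]
  gcongr
  exact_mod_cast card_biUnion_le

lemma add_sq_div_two_add_le_mul_log {δ : ℝ} (hδ : 0 ≤ δ) :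
    δ + δ ^ 2 / (2 + δ) ≤ (1 + δ) * Real.log (1 + δ) :=
  calc δ + δ ^ 2 / (2 + δ) = (1 + δ) * (2 * δ / (δ + 2)) := by field_simp; ring
    _ ≤ (1 + δ) * Real.log (1 + δ) := by gcongr; exact Real.le_log_one_add_of_nonneg hδ

lemma exp_le_one_add_pow {δ μ : ℝ} {n : ℕ} (hδ : 0 ≤ δ) (hμ : 0 ≤ μ) (hn : (1 + δ) * μ ≤ n) :
    Real.exp ((δ + δ ^ 2 / (2 + δ)) * μ) ≤ (1 + δ) ^ n := by
  rw [← Real.exp_log (show 0 < 1 + δ by positivity), ← Real.exp_nat_mul, Real.exp_le_exp]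
  have hlog : 0 ≤ Real.log (1 + δ) := Real.log_nonneg (by linarith)
  calc (δ + δ ^ 2 / (2 + δ)) * μ ≤ (1 + δ) * Real.log (1 + δ) * μ := by
        gcongr; exact add_sq_div_two_add_le_mul_log hδ
    _ = (1 + δ) * μ * Real.log (1 + δ) := by ring
    _ ≤ n * Real.log (1 + δ) := by gcongr

lemma dens_lt_le_exp_of_expect_one_add_pow_le (Y : Ω → ℕ) {δ μ : ℝ} (hδ : 0 ≤ δ) (hμ : 0 ≤ μ)
    (hY : 𝔼 ω, (1 + δ) ^ Y ω ≤ Real.exp (δ * μ)) :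
    (({ω | (1 + δ) * μ < Y ω} : Finset Ω).dens : ℝ) ≤ Real.exp (-(δ ^ 2 * μ) / (2 + δ)) := by
  have hmarkov := (dens_mul_le_expect {ω | (1 + δ) * μ < Y ω} (fun ω ↦ by positivity)
    fun ω hω ↦ exp_le_one_add_pow hδ hμ (mem_filter.1 hω).2.le).trans hY
  calc _ ≤ Real.exp (δ * μ) / Real.exp ((δ + δ ^ 2 / (2 + δ)) * μ) :=
        (le_div_iff₀ (Real.exp_pos _)).2 hmarkov
    _ = Real.exp (-(δ ^ 2 * μ) / (2 + δ)) := by rw [← Real.exp_sub]; ring_nf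

end ExponentialMoment

section RandomPermutation

variable {α : Type*} [Fintype α] [DecidableEq α]

/-- The permutations that map every element of `T` into `B`; this is the event that all of `T`
lands in the block `B`. -/
def permsMapping (T B : Finset α) : Finset (Perm α) := {π | ∀ i ∈ T, π i ∈ B}

lemma mem_permsMapping {T B : Finset α} {π : Perm α} :
    π ∈ permsMapping T B ↔ ∀ i ∈ T, π i ∈ B := by
  simp [permsMapping]

lemma card_permsMapping_insert_eq {T : Finset α} {a c : α} (B : Finset α) (ha : a ∉ T)
    (hc : c ∉ T) : #(permsMapping (insert c T) B) = #(permsMapping (insert a T) B) := by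
  have hswap : ∀ i ∈ T, swap a c i = i := fun i hi ↦
    swap_apply_of_ne_of_ne (ne_of_mem_of_not_mem hi ha) (ne_of_mem_of_not_mem hi hc)
  refine card_equiv (Equiv.mulRight (swap a c)) fun π ↦ ?_
  simp +contextual [mem_permsMapping, hswap]

lemma card_filter_compl_apply_mem {T B : Finset α} {π : Perm α} (hπ : π ∈ permsMapping T B) :
    #{c ∈ Tᶜ | π c ∈ B} = #B - #T := by
  have hpre : {c ∈ Tᶜ | π c ∈ B} = B.map π.symm.toEmbedding \ T := by
    ext c
    simp [and_comm]
  have hsub : T ⊆ B.map π.symm.toEmbedding := fun i hi ↦ by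
    simpa using mem_permsMapping.1 hπ i hi
  rw [hpre, card_sdiff_of_subset hsub, card_map]

/-- Both sides count the pairs `(π, c)` with `c ∉ T` and `π` mapping `insert c T` into `B`. -/
lemma card_sub_mul_card_permsMapping_insert {T : Finset α} {a : α} (B : Finset α) (ha : a ∉ T) :
    (Fintype.card α - #T) * #(permsMapping (insert a T) B) =
      (#B - #T) * #(permsMapping T B) := by
  have hfilter (c : α) :
      permsMapping (insert c T) B = {π ∈ permsMapping T B | π c ∈ B} := by
    ext π
    simp [mem_permsMapping, and_comm]
  calc (Fintype.card α - #T) * #(permsMapping (insert a T) B)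
      = ∑ c ∈ Tᶜ, #(permsMapping (insert c T) B) := by
        rw [sum_congr rfl fun c hc ↦ card_permsMapping_insert_eq B ha (mem_compl.1 hc),
          sum_const, smul_eq_mul, card_compl]
    _ = ∑ π ∈ permsMapping T B, #{c ∈ Tᶜ | π c ∈ B} := by
        simp only [hfilter]
        exact sum_card_bipartiteAbove_eq_sum_card_bipartiteBelow fun c (π : Perm α) ↦ π c ∈ B
    _ = (#B - #T) * #(permsMapping T B) := by
        rw [sum_congr rfl fun π ↦ card_filter_compl_apply_mem, sum_const, smul_eq_mul, mul_comm]

lemma card_mul_card_permsMapping_insert_le {T : Finset α} {a : α} (B : Finset α) (ha : a ∉ T) :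
    Fintype.card α * #(permsMapping (insert a T) B) ≤ #B * #(permsMapping T B) := by
  have hT : 0 < Fintype.card α - #T := Nat.sub_pos_of_lt (card_lt_univ_of_notMem ha)
  have hratio : Fintype.card α * (#B - #T) ≤ (Fintype.card α - #T) * #B := by
    rw [Nat.mul_sub, Nat.sub_mul, mul_comm #T]
    exact Nat.sub_le_sub_left (Nat.mul_le_mul_right _ (card_le_univ B)) _
  refine Nat.le_of_mul_le_mul_left ?_ hT
  calc (Fintype.card α - #T) * (Fintype.card α * #(permsMapping (insert a T) B))
      = Fintype.card α * (#B - #T) * #(permsMapping T B) := by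
        rw [mul_left_comm, card_sub_mul_card_permsMapping_insert B ha, mul_assoc]
    _ ≤ (Fintype.card α - #T) * #B * #(permsMapping T B) := by gcongr
    _ = (Fintype.card α - #T) * (#B * #(permsMapping T B)) := mul_assoc _ _ _

lemma dens_permsMapping_le (T B : Finset α) : (permsMapping T B).dens ≤ B.dens ^ #T := by
  induction T using Finset.induction_on with
  | empty => simp
  | insert a T ha ih =>
    have : Nonempty α := ⟨a⟩
    have hinsert : (permsMapping (insert a T) B).dens ≤ B.dens * (permsMapping T B).dens := by
      simp only [dens_eq_card_div_card, div_mul_div_comm]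
      rw [div_le_div_iff₀ (by positivity) (by positivity), ← mul_assoc, mul_comm (#_ : ℚ≥0)]
      refine mul_le_mul_of_nonneg_right ?_ zero_le
      exact_mod_cast card_mul_card_permsMapping_insert_le B ha
    calc (permsMapping (insert a T) B).dens ≤ B.dens * (permsMapping T B).dens := hinsert
      _ ≤ B.dens * B.dens ^ #T := by gcongr
      _ = B.dens ^ #(insert a T) := by rw [card_insert_of_notMem ha, pow_succ']

lemma one_add_pow_card_filter_apply_mem (S B : Finset α) (π : Perm α) (x : ℝ) :
    (1 + x) ^ #{i ∈ S | π i ∈ B} =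
      ∑ T ∈ S.powerset, if π ∈ permsMapping T B then x ^ #T else 0 := by
  have hpowerset : {T ∈ S.powerset | π ∈ permsMapping T B} = {i ∈ S | π i ∈ B}.powerset := by
    ext T
    simp [mem_permsMapping, subset_iff, forall_and]
  rw [← sum_filter, hpowerset, ← prod_const, prod_one_add]
  simp only [prod_const]

lemma expect_one_add_pow_card_filter_apply_mem_le (S B : Finset α) {x : ℝ} (hx : 0 ≤ x) :
    𝔼 π : Perm α, (1 + x) ^ #{i ∈ S | π i ∈ B} ≤ (1 + x * B.dens) ^ #S :=
  calc 𝔼 π : Perm α, (1 + x) ^ #{i ∈ S | π i ∈ B}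
      = ∑ T ∈ S.powerset, (permsMapping T B).dens * x ^ #T := by
        simp only [one_add_pow_card_filter_apply_mem, expect_sum_comm, expect_ite_mem_const]
    _ ≤ ∑ T ∈ S.powerset, (x * B.dens) ^ #T := by
        gcongr with T
        rw [mul_pow, mul_comm]
        gcongr
        exact_mod_cast dens_permsMapping_le T B
    _ = (1 + x * B.dens) ^ #S := by simp only [← prod_const, prod_one_add]

lemma dens_lt_card_filter_apply_mem_le_exp (S B : Finset α) {δ μ : ℝ} (hδ : 0 ≤ δ)
    (hμ : #S * B.dens ≤ μ) :
    (({π | (1 + δ) * μ < #{i ∈ S | π i ∈ B}} : Finset (Perm α)).dens : ℝ) ≤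
      Real.exp (-(δ ^ 2 * μ) / (2 + δ)) := by
  refine dens_lt_le_exp_of_expect_one_add_pow_le _ hδ (le_trans (by positivity) hμ) ?_
  calc 𝔼 π : Perm α, (1 + δ) ^ #{i ∈ S | π i ∈ B}
      ≤ (1 + δ * B.dens) ^ #S := expect_one_add_pow_card_filter_apply_mem_le S B hδ
    _ ≤ Real.exp (δ * B.dens) ^ #S := by
        gcongr
        linarith [Real.add_one_le_exp (δ * B.dens)]
    _ = Real.exp (δ * (#S * B.dens)) := by rw [← Real.exp_nat_mul]; ring_nf
    _ ≤ Real.exp (δ * μ) := by gcongr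

theorem sparse_entries_almost_equidistributed_general {ι : Type*} [Fintype ι]
    (S : Finset α) (B : ι → Finset α) {δ μ : ℝ} (hδ : 0 ≤ δ) (hμ : ∀ j, #S * (B j).dens ≤ μ) :
    1 - Fintype.card ι * Real.exp (-(δ ^ 2 * μ) / (2 + δ)) ≤
      (({π | ∀ j, #{i ∈ S | π i ∈ B j} ≤ (1 + δ) * μ} : Finset (Perm α)).dens : ℝ) := by
  set overfull : ι → Finset (Perm α) := fun j ↦ {π | (1 + δ) * μ < #{i ∈ S | π i ∈ B j}}
  set good : Finset (Perm α) := {π | ∀ j, #{i ∈ S | π i ∈ B j} ≤ (1 + δ) * μ}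
  have hcover : good ∪ univ.biUnion overfull = univ := by
    ext π
    simp [good, overfull, or_iff_not_imp_left]
  have hunion : (1 : ℝ) ≤ good.dens + ∑ j, ((overfull j).dens : ℝ) := by
    have h := (dens_union_le good (univ.biUnion overfull)).trans
      (add_le_add_right (dens_biUnion_le univ overfull) _)
    rw [hcover, dens_univ] at h
    exact_mod_cast h
  have hoverfull : ∑ j, ((overfull j).dens : ℝ) ≤
      Fintype.card ι * Real.exp (-(δ ^ 2 * μ) / (2 + δ)) := by
    rw [← nsmul_eq_mul]
    exact sum_le_card_nsmul _ _ _ fun j _ ↦ dens_lt_card_filter_apply_mem_le_exp S (B j) hδ (hμ j)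
  linarith

end RandomPermutation

/-- Theorem 2 of the paper.
Fix positive integers `d, J, s` with `J ∣ d` and `s ≤ d`, a partition of the coordinates
`Fin d` into `J` blocks `B j` each of size `d / J`, and a vector `g : Fin d → ℝ` with at
most `s` nonzero entries.  For a uniformly random permutation `π` of `Fin d`, with
probability at least `1 - 2 J exp(-Δ² s / (3 J))`, the number
`Y_j = #{i : g i ≠ 0 ∧ π i ∈ B j}` satisfies `Y_j ≤ (1 + Δ) s / J` for all `j`. -/
theorem sparse_entries_almost_equidistributed
    (d J s : ℕ) (hd : 0 < d) (hJ : 0 < J) (hs : 0 < s) (hJd : J ∣ d) (hsd : s ≤ d)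
    (B : Fin J → Finset (Fin d))
    (hBsize : ∀ j, (B j).card = d / J)
    (hBdisj : ∀ j j', j ≠ j' → Disjoint (B j) (B j'))
    (hBcover : ∀ i : Fin d, ∃ j, i ∈ B j)
    (g : Fin d → ℝ)
    (hg : (Finset.univ.filter (fun i => g i ≠ 0)).card ≤ s)
    (Δ : ℝ) (hΔ : 0 < Δ) (hΔ1 : Δ ≤ 1) :
    (1 - 2 * (J : ℝ) * Real.exp (-(Δ ^ 2 * s) / (3 * J))) *
        (Fintype.card (Equiv.Perm (Fin d)) : ℝ) ≤
      ((Finset.univ.filter (fun π : Equiv.Perm (Fin d) =>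
          ∀ j : Fin J,
            ((Finset.univ.filter (fun i : Fin d => g i ≠ 0 ∧ π i ∈ B j)).card : ℝ) ≤
              (1 + Δ) * s / J)).card : ℝ) := by
  have hmean (j : Fin J) : #{i | g i ≠ 0} * ((B j).dens : ℝ) ≤ s / J := by
    have hfactor : ((d / J : ℕ) : ℝ) * J = d := mod_cast Nat.div_mul_cancel hJd
    rw [nnratCast_dens, hBsize, Fintype.card_fin, ← mul_div_assoc,
      div_le_div_iff₀ (by positivity) (by positivity), mul_assoc, hfactor]
    gcongr
  have hgood := sparse_entries_almost_equidistributed_general _ B hΔ.le hmean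
  rw [nnratCast_dens, le_div_iff₀ (by positivity), Fintype.card_fin] at hgood
  simp only [filter_filter, ← mul_div_assoc] at hgood
  refine le_trans ?_ hgood
  rw [neg_div, neg_div, mul_comm 3, ← div_div _ (J : ℝ)]
  gcongr <;> linarith
end

section
/- Let f : ℝ^n → ℝ be twice continuously differentiable with Σ_{i,k} |∂²f/∂x_i∂x_k(y)| ≤ H for all y ∈ ℝ^n, where H > 0. Let E_f : ℝ^n → ℝ be any function (a noisy oracle) satisfying |E_f(y) − f(y)| ≤ σ for all y ∈ ℝ^n, where σ > 0. Set the query radius δ = 2√(σ/H). Then for every x ∈ ℝ^n and every sign vector z ∈ {−1, +1}^n, one has |(E_f(x + δz) − E_f(x))/δ − ⟨z, ∇f(x)⟩| ≤ 2√(σH). -/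
open scoped RealInnerProductSpace

/-!
A second-order Taylor estimate along the segment from `x` to `x + δ z` bounds the finite-difference
error of `f` by `H δ / 2`: the entries of `z` are at most `1` in absolute value, so
`|zᵀ ∇²f z|` is at most the element-wise ℓ₁-norm of the Hessian. Replacing `f` by the noisy oracle
changes the divided difference by at most `2 σ / δ`. At `δ = 2√(σ/H)` both errors equal `√(σ H)`.
-/

section Taylor

variable {E F : Type*} [NormedAddCommGroup E] [NormedSpace ℝ E]
  [NormedAddCommGroup F] [NormedSpace ℝ F]

theorem norm_sub_sub_smul_le_of_norm_second_deriv_le {φ φ' φ'' : ℝ → F} {a b C : ℝ} (hab : a ≤ b)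
    (hφ : ∀ t ∈ Set.Icc a b, HasDerivWithinAt φ (φ' t) (Set.Icc a b) t)
    (hφ' : ∀ t ∈ Set.Icc a b, HasDerivWithinAt φ' (φ'' t) (Set.Icc a b) t)
    (hC : ∀ t ∈ Set.Ico a b, ‖φ'' t‖ ≤ C) :
    ‖φ b - φ a - (b - a) • φ' a‖ ≤ C * (b - a) ^ 2 / 2 := by
  have h_slope : ∀ t ∈ Set.Ico a b, ‖φ' t - φ' a‖ ≤ C * (t - a) := fun t ht =>
    norm_image_sub_le_of_norm_deriv_le_segment' hφ' hC t (Set.Ico_subset_Icc_self ht)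
  have h_remainder : ∀ t ∈ Set.Icc a b, HasDerivWithinAt
      (fun t => φ t - φ a - (t - a) • φ' a) (φ' t - φ' a) (Set.Icc a b) t := fun t ht => by
    have h_linear : HasDerivWithinAt (fun t => (t - a) • φ' a) (φ' a) (Set.Icc a b) t := by
      simpa using ((hasDerivWithinAt_id t _).sub_const a).smul_const (φ' a)
    exact ((hφ t ht).sub_const (φ a)).sub h_linear
  have h_majorant (t : ℝ) : HasDerivAt (fun t => C * (t - a) ^ 2 / 2) (C * (t - a)) t := by
    have h_sq := ((hasDerivAt_id' t).sub_const a).fun_pow 2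
    exact ((h_sq.const_mul C).div_const 2).congr_deriv (by norm_num; ring)
  exact image_norm_le_of_norm_deriv_right_le_deriv_boundary
    (f := fun t => φ t - φ a - (t - a) • φ' a)
    (fun t ht => (h_remainder t ht).continuousWithinAt)
    (fun t ht => (h_remainder t (Set.Ico_subset_Icc_self ht)).mono_of_mem_nhdsWithin
      (Icc_mem_nhdsGE_of_mem ht))
    (by simp) h_majorant h_slope (Set.right_mem_Icc.2 hab)

theorem norm_sub_sub_fderiv_le_of_norm_second_fderiv_le {f : E → F} {f' : E → E →L[ℝ] F}
    {f'' : E → E →L[ℝ] E →L[ℝ] F} {s : Set E} (hs : Convex ℝ s) {x v : E} {C : ℝ}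
    (hx : x ∈ s) (hxv : x + v ∈ s)
    (hf : ∀ y ∈ s, HasFDerivWithinAt f (f' y) s y)
    (hf' : ∀ y ∈ s, HasFDerivWithinAt f' (f'' y) s y)
    (hC : ∀ y ∈ s, ‖f'' y v v‖ ≤ C) :
    ‖f (x + v) - f x - f' x v‖ ≤ C / 2 := by
  have h_mem : Set.MapsTo (fun t : ℝ => x + t • v) (Set.Icc 0 1) s :=
    fun t ht => hs.add_smul_mem hx hxv ht
  have h_line (t : ℝ) : HasDerivWithinAt (fun t : ℝ => x + t • v) v (Set.Icc 0 1) t := by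
    simpa using ((hasDerivWithinAt_id t (Set.Icc 0 1)).smul_const v).const_add x
  have h_first : ∀ t ∈ Set.Icc (0 : ℝ) 1, HasDerivWithinAt (fun t => f (x + t • v))
      (f' (x + t • v) v) (Set.Icc 0 1) t := fun t ht =>
    (hf _ (h_mem ht)).comp_hasDerivWithinAt t (h_line t) h_mem
  have h_second : ∀ t ∈ Set.Icc (0 : ℝ) 1, HasDerivWithinAt (fun t => f' (x + t • v) v)
      (f'' (x + t • v) v v) (Set.Icc 0 1) t := fun t ht => by
    have h_comp : HasDerivWithinAt (fun t => f' (x + t • v)) (f'' (x + t • v) v)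
        (Set.Icc 0 1) t := (hf' _ (h_mem ht)).comp_hasDerivWithinAt t (h_line t) h_mem
    simpa using h_comp.clm_apply (hasDerivWithinAt_const t (Set.Icc 0 1) v)
  simpa using norm_sub_sub_smul_le_of_norm_second_deriv_le zero_le_one h_first h_second
    fun t ht => hC _ (h_mem (Set.Ico_subset_Icc_self ht))

end Taylor

theorem norm_bilin_apply_le_sum_norm_of_norm_repr_le_one {𝕜 M N P ι κ : Type*} [NormedField 𝕜]
    [AddCommGroup M] [Module 𝕜 M] [AddCommGroup N] [Module 𝕜 N]
    [SeminormedAddCommGroup P] [NormedSpace 𝕜 P] [Fintype ι] [Fintype κ]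
    (b : Module.Basis ι 𝕜 M) (c : Module.Basis κ 𝕜 N) (B : M →ₗ[𝕜] N →ₗ[𝕜] P) {x : M} {y : N}
    (hx : ∀ i, ‖b.repr x i‖ ≤ 1) (hy : ∀ k, ‖c.repr y k‖ ≤ 1) :
    ‖B x y‖ ≤ ∑ i, ∑ k, ‖B (b i) (c k)‖ := by
  have h_expand : B x y = ∑ i, ∑ k, b.repr x i • c.repr y k • B (b i) (c k) := by
    rw [← LinearMap.sum_repr_mul_repr_mul b c]
    simp only [Finsupp.sum_fintype, zero_smul, smul_zero, Finset.sum_const_zero, implies_true]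
  rw [h_expand]
  refine norm_sum_le_of_le _ fun i _ => norm_sum_le_of_le _ fun k _ => ?_
  rw [norm_smul, norm_smul, ← mul_assoc]
  exact mul_le_of_le_one_left (norm_nonneg _) (mul_le_one₀ (hx i) (norm_nonneg _) (hy k))

section FiniteDifference

variable {E F : Type*} [NormedAddCommGroup E] [NormedSpace ℝ E]
  [NormedAddCommGroup F] [NormedSpace ℝ F]

theorem norm_inv_smul_sub_sub_fderiv_le {f : E → F} {f' : E → E →L[ℝ] F}
    {f'' : E → E →L[ℝ] E →L[ℝ] F} {s : Set E} (hs : Convex ℝ s) {x z : E} {δ H : ℝ} (hδ : 0 < δ)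
    (hx : x ∈ s) (hxz : x + δ • z ∈ s)
    (hf : ∀ y ∈ s, HasFDerivWithinAt f (f' y) s y)
    (hf' : ∀ y ∈ s, HasFDerivWithinAt f' (f'' y) s y)
    (hH : ∀ y ∈ s, ‖f'' y z z‖ ≤ H) :
    ‖δ⁻¹ • (f (x + δ • z) - f x) - f' x z‖ ≤ δ * H / 2 := by
  have h_second : ∀ y ∈ s, ‖f'' y (δ • z) (δ • z)‖ ≤ δ * (δ * H) := fun y hy => by
    simp only [map_smul, smul_apply, norm_smul, Real.norm_of_nonneg hδ.le]
    gcongr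
    exact hH y hy
  have h_taylor := norm_sub_sub_fderiv_le_of_norm_second_fderiv_le hs hx hxz hf hf' h_second
  calc ‖δ⁻¹ • (f (x + δ • z) - f x) - f' x z‖
      = ‖δ⁻¹ • (f (x + δ • z) - f x - f' x (δ • z))‖ := by
        rw [smul_sub _ (f (x + δ • z) - f x), map_smul, inv_smul_smul₀ hδ.ne']
    _ = δ⁻¹ * ‖f (x + δ • z) - f x - f' x (δ • z)‖ := by
        rw [norm_smul, norm_inv, Real.norm_of_nonneg hδ.le]
    _ ≤ δ⁻¹ * (δ * (δ * H) / 2) := by gcongr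
    _ = δ * H / 2 := by field_simp

theorem norm_inv_smul_sub_sub_inv_smul_sub_le {a b a' b' : F} {δ σ : ℝ} (hδ : 0 ≤ δ)
    (ha : ‖a' - a‖ ≤ σ) (hb : ‖b' - b‖ ≤ σ) :
    ‖δ⁻¹ • (b' - a') - δ⁻¹ • (b - a)‖ ≤ 2 * σ / δ := by
  calc ‖δ⁻¹ • (b' - a') - δ⁻¹ • (b - a)‖ = δ⁻¹ * ‖(b' - b) - (a' - a)‖ := by
        rw [← smul_sub, sub_sub_sub_comm, norm_smul, norm_inv, Real.norm_of_nonneg hδ]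
    _ ≤ δ⁻¹ * (σ + σ) := by gcongr; exact norm_sub_le_of_le hb ha
    _ = 2 * σ / δ := by ring

theorem noisy_finite_difference_bound_general {ι : Type*} [Fintype ι] (b : Module.Basis ι ℝ E)
    {f Ef : E → F} {f' : E → E →L[ℝ] F} {f'' : E → E →L[ℝ] E →L[ℝ] F} {s : Set E}
    (hs : Convex ℝ s) {x z : E} {δ H σ : ℝ} (hδ : 0 < δ) (hx : x ∈ s) (hxz : x + δ • z ∈ s)
    (hf : ∀ y ∈ s, HasFDerivWithinAt f (f' y) s y)
    (hf' : ∀ y ∈ s, HasFDerivWithinAt f' (f'' y) s y)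
    (hHess : ∀ y ∈ s, ∑ i, ∑ k, ‖f'' y (b i) (b k)‖ ≤ H)
    (hnoise : ‖Ef x - f x‖ ≤ σ) (hnoise' : ‖Ef (x + δ • z) - f (x + δ • z)‖ ≤ σ)
    (hz : ∀ i, |b.repr z i| ≤ 1) :
    ‖δ⁻¹ • (Ef (x + δ • z) - Ef x) - f' x z‖ ≤ δ * H / 2 + 2 * σ / δ := by
  have h_quad : ∀ y ∈ s, ‖f'' y z z‖ ≤ H := fun y hy =>
    (norm_bilin_apply_le_sum_norm_of_norm_repr_le_one b b (f'' y).toLinearMap₁₂ hz hz).trans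
      (hHess y hy)
  have h_exact := norm_inv_smul_sub_sub_fderiv_le hs hδ hx hxz hf hf' h_quad
  have h_noise := norm_inv_smul_sub_sub_inv_smul_sub_le hδ.le hnoise hnoise'
  linarith [norm_sub_le_norm_sub_add_norm_sub (δ⁻¹ • (Ef (x + δ • z) - Ef x))
    (δ⁻¹ • (f (x + δ • z) - f x)) (f' x z)]

end FiniteDifference

theorem taylor_error_add_noise_error_at_two_mul_sqrt_div {σ : ℝ} (hσ : 0 ≤ σ) (H : ℝ) :
    2 * √(σ / H) * H / 2 + 2 * σ / (2 * √(σ / H)) = 2 * √(σ * H) := by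
  have h_taylor : 2 * √(σ / H) * H / 2 = √(σ * H) := by
    calc 2 * √(σ / H) * H / 2 = √σ * (H / √H) := by rw [Real.sqrt_div hσ]; ring
      _ = √(σ * H) := by rw [Real.div_sqrt, Real.sqrt_mul hσ]
  have h_noise : 2 * σ / (2 * √(σ / H)) = √(σ * H) := by
    calc 2 * σ / (2 * √(σ / H)) = σ / √σ * √H := by
          rw [mul_div_mul_left _ _ two_ne_zero, Real.sqrt_div hσ, div_div_eq_mul_div,
            mul_div_right_comm]
      _ = √(σ * H) := by rw [Real.div_sqrt, Real.sqrt_mul hσ]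
  rw [h_taylor, h_noise, two_mul]

/-- noisy finite-difference directional-derivative bound with the optimal
query radius `δ = 2√(σ/H)`.
Let `f : ℝⁿ → ℝ` be twice continuously differentiable with element-wise ℓ₁-norm of the
Hessian bounded by `H > 0` everywhere, and let `E_f` be a noisy oracle with
`|E_f y - f y| ≤ σ` for all `y`, `σ > 0`.  Then for every `x` and sign vector
`z ∈ {-1, +1}ⁿ`, with `δ = 2√(σ/H)`,
`|(E_f(x + δ z) - E_f x)/δ - ⟨z, ∇f(x)⟩| ≤ 2√(σ H)`. -/
theorem noisy_finite_difference_bound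
    (n : ℕ) (f Ef : EuclideanSpace ℝ (Fin n) → ℝ) (H σ : ℝ) (hH : 0 < H) (hσ : 0 < σ)
    (hf : ContDiff ℝ 2 f)
    (hHess : ∀ y : EuclideanSpace ℝ (Fin n),
      ∑ i : Fin n, ∑ k : Fin n,
        |iteratedFDeriv ℝ 2 f y ![EuclideanSpace.single i 1, EuclideanSpace.single k 1]| ≤ H)
    (hnoise : ∀ y, |Ef y - f y| ≤ σ)
    (δ : ℝ) (hδ : δ = 2 * Real.sqrt (σ / H))
    (x z : EuclideanSpace ℝ (Fin n)) (hz : ∀ i, z i = 1 ∨ z i = -1) :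
    |(Ef (x + δ • z) - Ef x) / δ - ⟪z, gradient f x⟫| ≤ 2 * Real.sqrt (σ * H) := by
  subst hδ
  have hf' : ContDiff ℝ 1 (fderiv ℝ f) := hf.fderiv_right one_add_one_eq_two.le
  have hz_abs (i : Fin n) : |z i| ≤ 1 := by rcases hz i with h | h <;> simp [h]
  have h_bound := noisy_finite_difference_bound_general
    (EuclideanSpace.basisFun (Fin n) ℝ).toBasis convex_univ
    (by positivity : 0 < 2 * √(σ / H)) (Set.mem_univ x) (Set.mem_univ _)
    (fun y _ => (hf.differentiable two_ne_zero y).hasFDerivAt.hasFDerivWithinAt)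
    (fun y _ => (hf'.differentiable one_ne_zero y).hasFDerivAt.hasFDerivWithinAt)
    (fun y _ => by simpa [iteratedFDeriv_two_apply] using hHess y)
    (hnoise x) (hnoise _) hz_abs
  rwa [taylor_error_add_noise_error_at_two_mul_sqrt_div hσ.le, smul_eq_mul, inv_mul_eq_div,
    ← inner_gradient_left, real_inner_comm, Real.norm_eq_abs] at h_bound
end

section
/- Let f : ℝ^n → ℝ be twice continuously differentiable with Σ_{i,k} |∂²f/∂x_i∂x_k(y)| ≤ H for all y ∈ ℝ^n, where H > 0, and let E_f : ℝ^n → ℝ satisfy |E_f(y) − f(y)| ≤ σ for all y, where σ > 0. Fix x ∈ ℝ^n, sign vectors z₁,…,z_m ∈ {−1, +1}^n, and δ = 2√(σ/H). Define y ∈ ℝ^m by y_i = (E_f(x + δz_i) − E_f(x))/(√m · δ), and let Z ∈ ℝ^{m×n} be the matrix whose i-th row is z_i^⊤/√m. Then ‖y − Z∇f(x)‖₂ ≤ 2√(σH). -/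
/-!
Along a vector with entries in `[-1, 1]`, the quadratic form of the Hessian is at most its
element-wise `ℓ₁`-norm, so the second-order Taylor formula puts the forward difference of `f` with
step `δ` within `H * δ / 2` of the directional derivative. Noise of size `σ` in both evaluations
adds at most `2 * σ / δ`. The step `δ = 2 * √(σ / H)` makes the two errors equal and minimizes
their sum, which becomes `2 * √(σ * H)`. Since each row carries a factor `1 / √m`, the `ℓ₂`-norm
of the error is the root mean square of the errors of the individual measurements, and the same
bound applies.
-/

open Set

section BilinearMap

variable {𝕜 M N P ι κ : Type*} [NormedField 𝕜] [AddCommGroup M] [Module 𝕜 M] [AddCommGroup N]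
  [Module 𝕜 N] [SeminormedAddCommGroup P] [NormedSpace 𝕜 P] [Fintype ι] [Fintype κ]

lemma norm_apply_apply_le_sum_of_norm_repr_le_one (b : Module.Basis ι 𝕜 M)
    (c : Module.Basis κ 𝕜 N) (B : M →ₗ[𝕜] N →ₗ[𝕜] P) {u : M} {v : N}
    (hu : ∀ i, ‖b.repr u i‖ ≤ 1) (hv : ∀ k, ‖c.repr v k‖ ≤ 1) :
    ‖B u v‖ ≤ ∑ i, ∑ k, ‖B (b i) (c k)‖ := by
  have expansion : B u v = ∑ i, ∑ k, b.repr u i • c.repr v k • B (b i) (c k) := by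
    rw [← LinearMap.sum_repr_mul_repr_mul b c, Finsupp.sum_fintype _ _ (by simp)]
    exact Finset.sum_congr rfl fun i _ => Finsupp.sum_fintype _ _ (by simp)
  rw [expansion]
  refine norm_sum_le_of_le _ fun i _ => norm_sum_le_of_le _ fun k _ => ?_
  rw [smul_smul, norm_smul, norm_mul]
  exact mul_le_of_le_one_left (norm_nonneg _) (mul_le_one₀ (hu i) (norm_nonneg _) (hv k))

end BilinearMap

section EuclideanSpace

variable {κ : Type*} [Fintype κ]

lemma norm_fderiv_fderiv_apply_apply_le_sum [DecidableEq κ] {F : Type*} [NormedAddCommGroup F]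
    [NormedSpace ℝ F] (f : EuclideanSpace ℝ κ → F) (y : EuclideanSpace ℝ κ)
    {v : EuclideanSpace ℝ κ} (hv : ∀ k, |v k| ≤ 1) :
    ‖fderiv ℝ (fderiv ℝ f) y v v‖ ≤ ∑ i, ∑ k,
      ‖iteratedFDeriv ℝ 2 f y ![EuclideanSpace.single i 1, EuclideanSpace.single k 1]‖ := by
  simpa [iteratedFDeriv_two_apply] using
    norm_apply_apply_le_sum_of_norm_repr_le_one (EuclideanSpace.basisFun κ ℝ).toBasis
      (EuclideanSpace.basisFun κ ℝ).toBasis (fderiv ℝ (fderiv ℝ f) y).toLinearMap₁₂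
      (u := v) (v := v) (by simpa using hv) (by simpa using hv)

lemma sum_mul_gradient_eq_fderiv (f : EuclideanSpace ℝ κ → ℝ) (x v : EuclideanSpace ℝ κ) :
    ∑ k, v k * gradient f x k = fderiv ℝ f x v := by
  rw [← inner_gradient_left, PiLp.inner_apply]
  rfl

end EuclideanSpace

section Taylor

variable {E F : Type*} [NormedAddCommGroup E] [NormedSpace ℝ E] [NormedAddCommGroup F]
  [NormedSpace ℝ F]

lemma norm_sub_sub_smul_le_of_norm_deriv_deriv_le {g g' g'' : ℝ → F} {a b C : ℝ} (hab : a ≤ b)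
    (hg : ∀ t ∈ Icc a b, HasDerivWithinAt g (g' t) (Icc a b) t)
    (hg' : ∀ t ∈ Icc a b, HasDerivWithinAt g' (g'' t) (Icc a b) t)
    (bound : ∀ t ∈ Icc a b, ‖g'' t‖ ≤ C) :
    ‖g b - g a - (b - a) • g' a‖ ≤ C * (b - a) ^ 2 / 2 := by
  have deriv_bound : ∀ t ∈ Icc a b, ‖g' t - g' a‖ ≤ C * (t - a) :=
    norm_image_sub_le_of_norm_deriv_le_segment' hg' fun t ht => bound t (Ico_subset_Icc_self ht)
  have remainder_deriv : ∀ t ∈ Icc a b,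
      HasDerivWithinAt (fun t => g t - g a - (t - a) • g' a) (g' t - g' a) (Icc a b) t := by
    intro t ht
    simpa using ((hg t ht).sub_const (g a)).fun_sub
      (((hasDerivWithinAt_id t _).sub_const a).smul_const (g' a))
  have parabola_deriv : ∀ t, HasDerivAt (fun t => C * (t - a) ^ 2 / 2) (C * (t - a)) t := by
    intro t
    convert! ((((hasDerivAt_id t).sub_const a).pow 2).const_mul C).div_const 2 using 1
    simp only [id, Nat.cast_ofNat]
    ring
  refine image_norm_le_of_norm_deriv_right_le_deriv_boundary
    (fun t ht => (remainder_deriv t ht).continuousWithinAt) (fun t ht => ?_) (by simp)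
    parabola_deriv (fun t ht => deriv_bound t (Ico_subset_Icc_self ht)) (right_mem_Icc.2 hab)
  exact (remainder_deriv t (Ico_subset_Icc_self ht)).mono_of_mem_nhdsWithin
    (Icc_mem_nhdsGE_of_mem ht)

lemma norm_add_smul_sub_sub_smul_fderiv_le {f : E → F} {x v : E} {δ C : ℝ} (hδ : 0 ≤ δ)
    (hf : ∀ t ∈ Icc 0 δ, DifferentiableAt ℝ f (x + t • v))
    (hf' : ∀ t ∈ Icc 0 δ, DifferentiableAt ℝ (fderiv ℝ f) (x + t • v))
    (bound : ∀ t ∈ Icc 0 δ, ‖fderiv ℝ (fderiv ℝ f) (x + t • v) v v‖ ≤ C) :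
    ‖f (x + δ • v) - f x - δ • fderiv ℝ f x v‖ ≤ C * δ ^ 2 / 2 := by
  have line (t : ℝ) : HasDerivWithinAt (fun t : ℝ => x + t • v) v (Icc 0 δ) t := by
    simpa using ((hasDerivWithinAt_id t _).smul_const v).const_add x
  have first_deriv : ∀ t ∈ Icc 0 δ,
      HasDerivWithinAt (fun t : ℝ => f (x + t • v)) (fderiv ℝ f (x + t • v) v) (Icc 0 δ) t :=
    fun t ht => (hf t ht).hasFDerivAt.comp_hasDerivWithinAt t (line t)
  have second_deriv : ∀ t ∈ Icc 0 δ, HasDerivWithinAt (fun t : ℝ => fderiv ℝ f (x + t • v) v)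
      (fderiv ℝ (fderiv ℝ f) (x + t • v) v v) (Icc 0 δ) t := by
    intro t ht
    have h := (hf' t ht).hasFDerivAt.comp_hasDerivWithinAt t (line t)
    simpa using h.clm_apply (hasDerivWithinAt_const t _ v)
  simpa using norm_sub_sub_smul_le_of_norm_deriv_deriv_le hδ first_deriv second_deriv bound

lemma norm_forward_difference_sub_fderiv_le {f e : E → F} {x v : E} {δ C σ : ℝ} (hδ : 0 < δ)
    (hf : ∀ t ∈ Icc 0 δ, DifferentiableAt ℝ f (x + t • v))
    (hf' : ∀ t ∈ Icc 0 δ, DifferentiableAt ℝ (fderiv ℝ f) (x + t • v))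
    (bound : ∀ t ∈ Icc 0 δ, ‖fderiv ℝ (fderiv ℝ f) (x + t • v) v v‖ ≤ C)
    (noise_base : ‖e x - f x‖ ≤ σ) (noise_shift : ‖e (x + δ • v) - f (x + δ • v)‖ ≤ σ) :
    ‖δ⁻¹ • (e (x + δ • v) - e x) - fderiv ℝ f x v‖ ≤ 2 * σ / δ + C * δ / 2 := by
  have taylor := norm_add_smul_sub_sub_smul_fderiv_le hδ.le hf hf' bound
  have decomposition : δ⁻¹ • (e (x + δ • v) - e x) - fderiv ℝ f x v =
      δ⁻¹ • ((e (x + δ • v) - f (x + δ • v)) - (e x - f x) +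
        (f (x + δ • v) - f x - δ • fderiv ℝ f x v)) := by
    match_scalars <;> field_simp <;> ring
  calc ‖δ⁻¹ • (e (x + δ • v) - e x) - fderiv ℝ f x v‖
      ≤ δ⁻¹ * (σ + σ + C * δ ^ 2 / 2) := by
        rw [decomposition, norm_smul, Real.norm_of_nonneg (inv_nonneg.2 hδ.le)]
        gcongr
        exact norm_add_le_of_le (norm_sub_le_of_le noise_shift noise_base) taylor
    _ = 2 * σ / δ + C * δ / 2 := by field_simp; ring

end Taylor

lemma two_mul_div_add_mul_div_two_eq {H σ : ℝ} (hH : 0 < H) (hσ : 0 < σ) :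
    2 * σ / (2 * √(σ / H)) + H * (2 * √(σ / H)) / 2 = 2 * √(σ * H) := by
  have noise_term : σ / √(σ / H) = √(σ * H) := by
    rw [div_eq_iff (by positivity), ← Real.sqrt_mul (by positivity),
      show σ * H * (σ / H) = σ ^ 2 by field_simp, Real.sqrt_sq hσ.le]
  have taylor_term : H * √(σ / H) = √(σ * H) := by
    rw [← Real.sqrt_sq hH.le, ← Real.sqrt_mul (by positivity), Real.sqrt_sq hH.le]
    congr 1
    field_simp
  linear_combination (norm := skip) noise_term + taylor_term
  field_simp
  ring

lemma sqrt_sum_div_sqrt_card_sq_le {ι : Type*} [Fintype ι] {a : ι → ℝ} {C : ℝ} (hC : 0 ≤ C)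
    (ha : ∀ i, |a i| ≤ C) : √(∑ i, (a i / √(Fintype.card ι)) ^ 2) ≤ C := by
  refine Real.sqrt_le_iff.2 ⟨hC, ?_⟩
  calc ∑ i, (a i / √(Fintype.card ι)) ^ 2
      = (∑ i, a i ^ 2) / Fintype.card ι := by
        simp only [div_pow, Real.sq_sqrt (Nat.cast_nonneg _), Finset.sum_div]
    _ ≤ C ^ 2 := by
        refine div_le_of_le_mul₀ (Nat.cast_nonneg _) (sq_nonneg C) ?_
        rw [mul_comm, ← nsmul_eq_mul]
        exact Finset.sum_le_card_nsmul _ _ _ fun i _ => sq_le_sq.2 ((ha i).trans (le_abs_self C))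

theorem measurement_error_bound_general {ι κ : Type*} [Fintype ι] [Fintype κ] [DecidableEq κ]
    {f Ef : EuclideanSpace ℝ κ → ℝ} {H σ : ℝ} (hH : 0 < H) (hσ : 0 < σ)
    (hf : Differentiable ℝ f) (hf' : Differentiable ℝ (fderiv ℝ f))
    (hHess : ∀ y, ∑ i, ∑ k,
      |iteratedFDeriv ℝ 2 f y ![EuclideanSpace.single i 1, EuclideanSpace.single k 1]| ≤ H)
    (hnoise : ∀ y, |Ef y - f y| ≤ σ) (x : EuclideanSpace ℝ κ)
    {z : ι → EuclideanSpace ℝ κ} (hz : ∀ i k, |z i k| ≤ 1)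
    {δ : ℝ} (hδ : δ = 2 * √(σ / H))
    {y : ι → ℝ} (hy : ∀ i, y i = (Ef (x + δ • z i) - Ef x) / (√(Fintype.card ι) * δ))
    {Z : Matrix ι κ ℝ} (hZ : ∀ i k, Z i k = z i k / √(Fintype.card ι)) :
    √(∑ i, (y i - ∑ k, Z i k * gradient f x k) ^ 2) ≤ 2 * √(σ * H) := by
  have hδ_pos : 0 < δ := by rw [hδ]; positivity
  have curvature (i : ι) (w : EuclideanSpace ℝ κ) :
      ‖fderiv ℝ (fderiv ℝ f) w (z i) (z i)‖ ≤ H :=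
    (norm_fderiv_fderiv_apply_apply_le_sum f w (hz i)).trans (hHess w)
  have measurement (i : ι) :
      |δ⁻¹ • (Ef (x + δ • z i) - Ef x) - fderiv ℝ f x (z i)| ≤ 2 * √(σ * H) := by
    rw [← two_mul_div_add_mul_div_two_eq hH hσ, ← hδ]
    exact norm_forward_difference_sub_fderiv_le hδ_pos (fun _ _ => hf _) (fun _ _ => hf' _)
      (fun _ _ => curvature i _) (hnoise _) (hnoise _)
  have residual (i : ι) : y i - ∑ k, Z i k * gradient f x k =
      (δ⁻¹ • (Ef (x + δ • z i) - Ef x) - fderiv ℝ f x (z i)) / √(Fintype.card ι) := by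
    simp only [hy, hZ, div_mul_eq_mul_div, ← Finset.sum_div, sum_mul_gradient_eq_fderiv,
      smul_eq_mul]
    ring
  simp only [residual]
  exact sqrt_sum_div_sqrt_card_sq_le (by positivity) measurement

/-- aggregate measurement-error bound for the compressed-sensing linear
system `y ≈ Z ∇f(x)` used by the block gradient estimator, Algorithm 1.
Let `f : ℝⁿ → ℝ` be twice continuously differentiable with element-wise ℓ₁-norm of the
Hessian bounded by `H > 0` everywhere, and `E_f` a noisy oracle with `|E_f y - f y| ≤ σ`,
`σ > 0`.  Fix sign vectors `z₁, …, z_m ∈ {-1,+1}ⁿ` and `δ = 2√(σ/H)`.  With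
`y i = (E_f(x + δ zᵢ) - E_f x)/(√m δ)` and `Z` the matrix with rows `zᵢᵀ/√m`,
`‖y - Z ∇f(x)‖₂ ≤ 2 √(σ H)`. -/
theorem measurement_error_bound
    (n m : ℕ) (f Ef : EuclideanSpace ℝ (Fin n) → ℝ) (H σ : ℝ) (hH : 0 < H) (hσ : 0 < σ)
    (hf : ContDiff ℝ 2 f)
    (hHess : ∀ y : EuclideanSpace ℝ (Fin n),
      ∑ i : Fin n, ∑ k : Fin n,
        |iteratedFDeriv ℝ 2 f y ![EuclideanSpace.single i 1, EuclideanSpace.single k 1]| ≤ H)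
    (hnoise : ∀ y, |Ef y - f y| ≤ σ)
    (x : EuclideanSpace ℝ (Fin n))
    (z : Fin m → EuclideanSpace ℝ (Fin n)) (hz : ∀ i k, z i k = 1 ∨ z i k = -1)
    (δ : ℝ) (hδ : δ = 2 * Real.sqrt (σ / H))
    (y : Fin m → ℝ)
    (hy : ∀ i, y i = (Ef (x + δ • z i) - Ef x) / (Real.sqrt m * δ))
    (Z : Matrix (Fin m) (Fin n) ℝ)
    (hZ : ∀ i k, Z i k = z i k / Real.sqrt m) :
    Real.sqrt (∑ i : Fin m, (y i - ∑ k : Fin n, Z i k * gradient f x k) ^ 2) ≤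
      2 * Real.sqrt (σ * H) := by
  have hz' (i : Fin m) (k : Fin n) : |z i k| ≤ 1 := by rcases hz i k with h | h <;> simp [h]
  exact measurement_error_bound_general hH hσ (hf.differentiable two_ne_zero)
    ((hf.fderiv_right (m := 1) one_add_one_eq_two.le).differentiable one_ne_zero) hHess hnoise x
    hz' hδ (by simpa using hy) (by simpa using hZ)
end
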